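/- arXiv:1409.2217 — 2 statements merged into one kernel-verified Lean document; each statement's English description precedes it below -/
import Mathlib

section
/- Let f : [-π,π]² → [0,∞) be integrable and even, i.e., f(-x,-y) = f(x,y) for all x,y ∈ [-π,π]. Then there exists a sequence (f_n) of nonnegative even trigonometric polynomials, that is, functions of the form f_n(x,y) = Σ_{j,k=-m}^m a_{j,k} e^{ι(jx+ky)} with real coefficients a_{j,k}, satisfying f_n ≥ 0 and f_n(-x,-y) = f_n(x,y), such that f_n → f in L¹([-π,π]²). -/
open MeasureTheory Real Filter

/-!
A positive element of a C⋆-algebra has the form `star b * b`, so approximating `b` from a dense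
star subalgebra approximates it by positive elements of that subalgebra. For `C((ℝ / ℤ)^ι, ℂ)` and
the trigonometric polynomials (dense by Stone–Weierstrass) this is the uniform density of the
nonnegative trigonometric polynomials among the nonnegative continuous functions, and hence their
`Lᵖ` density among the nonnegative functions. Taking even parts is a contraction of `Lᵖ` that fixes
the even function to be approximated, and it turns a real-valued trigonometric polynomial into one
with real coefficients, because `z e_k + conj z e_{-k}` has even part `Re z (e_k + e_{-k})`.
-/

open UnitAddTorus (mFourier)
open scoped ComplexOrder ENNReal

section Approximation

lemma mem_closure_setOf_nonneg {A : Type*} [CStarAlgebra A] [PartialOrder A] [StarOrderedRing A]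
    {S : StarSubalgebra ℂ A} (hS : S.topologicalClosure = ⊤) {a : A} (ha : 0 ≤ a) :
    a ∈ closure {b | b ∈ S ∧ 0 ≤ b} := by
  obtain ⟨b, rfl⟩ := CStarAlgebra.nonneg_iff_eq_star_mul_self.1 ha
  have hb : b ∈ closure (S : Set A) := by
    rw [← StarSubalgebra.topologicalClosure_coe, hS]
    exact Set.mem_univ b
  exact map_mem_closure (f := fun c : A => star c * c) (by fun_prop) hb fun c hc =>
    ⟨mul_mem (star_mem hc) hc, star_mul_self_nonneg c⟩

variable {X : Type*} [TopologicalSpace X] [MeasurableSpace X] {ν : Measure X} {p ε : ℝ≥0∞}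

lemma exists_mem_eLpNorm_sub_le_of_mem_closure [CompactSpace X] [IsFiniteMeasure ν]
    {E : Type*} [NormedAddCommGroup E] {S : Set C(X, E)} {g : C(X, E)} (hg : g ∈ closure S)
    (hε : ε ≠ 0) : ∃ P ∈ S, eLpNorm (⇑P - ⇑g) p ν ≤ ε := by
  have hν : ν Set.univ ^ p.toReal⁻¹ ≠ ∞ := by finiteness
  obtain ⟨δ, hδ, hδε⟩ := ENNReal.exists_nnreal_pos_mul_lt hν hε
  obtain ⟨P, hPS, hP⟩ := Metric.mem_closure_iff.1 hg δ hδ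
  have hPg (t : X) : ‖(⇑P - ⇑g) t‖ ≤ δ := by
    rw [Pi.sub_apply, ← dist_eq_norm, dist_comm]
    exact (ContinuousMap.dist_apply_le_dist t).trans hP.le
  refine ⟨P, hPS, (eLpNorm_le_of_ae_bound (ae_of_all ν hPg)).trans ?_⟩
  rw [ENNReal.ofReal_coe_nnreal, mul_comm]
  exact hδε.le

lemma exists_continuousMap_nonneg_eLpNorm_sub_le [NormalSpace X] [BorelSpace X] [ν.WeaklyRegular]
    (hp : p ≠ ∞) {h : X → ℝ} (hh : MemLp h p ν) (h_nonneg : 0 ≤ᵐ[ν] h) (hε : ε ≠ 0) :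
    ∃ g : C(X, ℝ), 0 ≤ g ∧ eLpNorm (h - ⇑g) p ν ≤ ε := by
  obtain ⟨g, hg, -⟩ := hh.exists_boundedContinuous_eLpNorm_sub_le hp hε
  refine ⟨g.toContinuousMap ⊔ 0, le_sup_right, (eLpNorm_mono_ae ?_).trans hg⟩
  filter_upwards [h_nonneg] with t (ht : 0 ≤ h t)
  have hmax := abs_max_sub_max_le_abs (h t) (g t) 0
  rwa [max_eq_left ht] at hmax

end Approximation

section Reflection

lemma isNegInvariant_map {G H : Type*} [Neg G] [Neg H] [MeasurableSpace G] [MeasurableSpace H]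
    [MeasurableNeg G] [MeasurableNeg H] {μ : Measure G} [μ.IsNegInvariant] {φ : G → H}
    (hφ : Measurable φ) (hφ_neg : ∀ x, φ (-x) = -φ x) : (μ.map φ).IsNegInvariant where
  neg_eq_self := by
    have hcomm : Neg.neg ∘ φ = φ ∘ Neg.neg := funext fun x => (hφ_neg x).symm
    rw [Measure.neg, Measure.map_map measurable_neg hφ, hcomm, ← Measure.map_map hφ measurable_neg,
      Measure.map_neg_eq_self]

lemma isNegInvariant_restrict {G : Type*} [Neg G] [MeasurableSpace G] [MeasurableNeg G]
    {μ : Measure G} [μ.IsNegInvariant] {s : Set G} (hs : MeasurableSet s)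
    (hs_neg : Neg.neg ⁻¹' s = s) : (μ.restrict s).IsNegInvariant where
  neg_eq_self := by
    have hmp := (Measure.measurePreserving_neg μ).restrict_preimage hs
    rw [hs_neg] at hmp
    exact hmp.map_eq

variable {G E : Type*}

/-- The even part `x ↦ (u x + u (-x)) / 2` of a function with values in a real vector space. -/
noncomputable def evenPart [Neg G] [AddCommGroup E] [Module ℝ E] (u : G → E) (x : G) : E :=
  (2⁻¹ : ℝ) • (u x + u (-x))

lemma evenPart_neg [InvolutiveNeg G] [AddCommGroup E] [Module ℝ E] (u : G → E) (x : G) :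
    evenPart u (-x) = evenPart u x := by
  simp only [evenPart, neg_neg, add_comm]

lemma eLpNorm_evenPart_le [Neg G] [NormedAddCommGroup E] [NormedSpace ℝ E]
    [MeasurableSpace G] [MeasurableNeg G] {ν : Measure G} [ν.IsNegInvariant] {p : ℝ≥0∞}
    (hp : 1 ≤ p) {u : G → E} (hu : AEStronglyMeasurable u ν) :
    eLpNorm (evenPart u) p ν ≤ eLpNorm u p ν := by
  have hneg := Measure.measurePreserving_neg ν
  calc eLpNorm (evenPart u) p ν
      = ‖(2⁻¹ : ℝ)‖ₑ * eLpNorm (u + u ∘ Neg.neg) p ν := eLpNorm_const_smul ..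
    _ ≤ ‖(2⁻¹ : ℝ)‖ₑ * (eLpNorm u p ν + eLpNorm (u ∘ Neg.neg) p ν) := by
        gcongr
        exact eLpNorm_add_le hu (hu.comp_measurePreserving hneg) hp
    _ = eLpNorm u p ν := by
        rw [eLpNorm_comp_measurePreserving hu hneg, ← two_mul, ← mul_assoc,
          enorm_inv two_ne_zero, ← ofReal_norm]
        simp [ENNReal.inv_mul_cancel]

end Reflection

section Torus

variable {ι : Type*} [Fintype ι]

/-- The trigonometric polynomials on the torus `(ℝ / ℤ)^ι` with coefficients in `R`, to be used
with `R = ℂ` and `R = ℝ`. They are complex-valued in both cases. -/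
noncomputable def trigPolynomials (R ι : Type*) [Fintype ι] [Semiring R] [Module R ℂ]
    [ContinuousConstSMul R ℂ] : Submodule R C(UnitAddTorus ι, ℂ) :=
  Submodule.span R (Set.range mFourier)

lemma mem_closure_trigPolynomials_nonneg {g : C(UnitAddTorus ι, ℂ)} (hg : 0 ≤ g) :
    g ∈ closure {P | P ∈ trigPolynomials ℂ ι ∧ 0 ≤ P} := by
  simp only [trigPolynomials, ← UnitAddTorus.mFourierSubalgebra_coe]
  exact mem_closure_setOf_nonneg UnitAddTorus.mFourierSubalgebra_closure_eq_top hg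

lemma mFourier_apply_neg (k : ι → ℤ) (t : UnitAddTorus ι) :
    mFourier k (-t) = mFourier (-k) t := by
  simp [mFourier, fourier_apply]

lemma exists_mem_trigPolynomials_real_eq_evenPart_re {P : C(UnitAddTorus ι, ℂ)}
    (hP : P ∈ trigPolynomials ℂ ι) :
    ∃ Q ∈ trigPolynomials ℝ ι, ∀ t, Q t = evenPart (fun s => ((P s).re : ℂ)) t := by
  induction hP using Submodule.closure_induction with
  | zero => exact ⟨0, zero_mem _, fun t => by simp [evenPart]⟩
  | add P₁ P₂ _ _ ih₁ ih₂ =>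
    obtain ⟨Q₁, hQ₁, hPQ₁⟩ := ih₁
    obtain ⟨Q₂, hQ₂, hPQ₂⟩ := ih₂
    refine ⟨Q₁ + Q₂, add_mem hQ₁ hQ₂, fun t => ?_⟩
    simp only [ContinuousMap.add_apply, hPQ₁, hPQ₂, evenPart, Complex.add_re, Complex.ofReal_add,
      Complex.real_smul]
    ring
  | smul_mem z _ he =>
    obtain ⟨k, rfl⟩ := he
    refine ⟨(z.re / 2) • (mFourier k + mFourier (-k)), ?_, fun t => ?_⟩
    · exact Submodule.smul_mem _ _
        (add_mem (Submodule.subset_span ⟨k, rfl⟩) (Submodule.subset_span ⟨-k, rfl⟩))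
    · have hneg : mFourier (-k) t = starRingEnd ℂ (mFourier k t) := UnitAddTorus.mFourier_neg
      calc ((z.re / 2) • (mFourier k + mFourier (-k))) t
          = ((z.re / 2 : ℝ) : ℂ) * (mFourier k t + starRingEnd ℂ (mFourier k t)) := by
            rw [← hneg]
            rfl
        _ = ((z.re * (mFourier k t).re : ℝ) : ℂ) := by
            rw [Complex.add_conj]
            push_cast
            ring
        _ = evenPart (fun s => (((z • mFourier k) s).re : ℂ)) t := by
            simp only [evenPart, ContinuousMap.smul_apply, smul_eq_mul, mFourier_apply_neg, hneg,
              Complex.mul_re, Complex.conj_re, Complex.conj_im, Complex.real_smul]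
            push_cast
            ring

variable {ν : Measure (UnitAddTorus ι)} [IsFiniteMeasure ν] {p ε : ℝ≥0∞} {h : UnitAddTorus ι → ℝ}

lemma exists_nonneg_mem_trigPolynomials_eLpNorm_sub_le (hp₁ : 1 ≤ p) (hp : p ≠ ∞)
    (hh : MemLp h p ν) (h_nonneg : 0 ≤ᵐ[ν] h) (hε : ε ≠ 0) :
    ∃ P ∈ trigPolynomials ℂ ι, 0 ≤ P ∧ eLpNorm (fun t => P t - (h t : ℂ)) p ν ≤ ε := by
  have hε₂ : ε / 2 ≠ 0 := (ENNReal.half_pos hε).ne'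
  obtain ⟨g, hg, hgε⟩ := exists_continuousMap_nonneg_eLpNorm_sub_le hp hh h_nonneg hε₂
  let gc : C(UnitAddTorus ι, ℂ) := ⟨fun t => (g t : ℂ), by fun_prop⟩
  have hgc : 0 ≤ gc := fun t => Complex.zero_le_real.2 (hg t)
  obtain ⟨P, ⟨hP, hP_nonneg⟩, hPε⟩ :=
    exists_mem_eLpNorm_sub_le_of_mem_closure (ν := ν) (p := p)
      (mem_closure_trigPolynomials_nonneg hgc) hε₂
  refine ⟨P, hP, hP_nonneg, ?_⟩
  have hgh : eLpNorm (fun t => ((h t - g t : ℝ) : ℂ)) p ν = eLpNorm (h - ⇑g) p ν :=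
    eLpNorm_congr_norm_ae (ae_of_all _ fun t => Complex.norm_real (h t - g t))
  calc eLpNorm (fun t => P t - (h t : ℂ)) p ν
      = eLpNorm ((⇑P - ⇑gc) - fun t => ((h t - g t : ℝ) : ℂ)) p ν := by
        congr 1
        ext t
        simp [gc]
    _ ≤ eLpNorm (⇑P - ⇑gc) p ν + eLpNorm (fun t => ((h t - g t : ℝ) : ℂ)) p ν := by
        refine eLpNorm_sub_le (by fun_prop) ?_ hp₁
        exact Complex.continuous_ofReal.comp_aestronglyMeasurable
          (hh.aestronglyMeasurable.sub g.continuous.aestronglyMeasurable)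
    _ ≤ ε / 2 + ε / 2 := by
        rw [hgh]
        gcongr
    _ = ε := ENNReal.add_halves ε

theorem exists_even_nonneg_mem_trigPolynomials_eLpNorm_sub_le [ν.IsNegInvariant]
    (hp₁ : 1 ≤ p) (hp : p ≠ ∞) (hh : MemLp h p ν) (h_nonneg : 0 ≤ᵐ[ν] h)
    (h_even : ∀ᵐ t ∂ν, h (-t) = h t) (hε : ε ≠ 0) :
    ∃ Q ∈ trigPolynomials ℝ ι, 0 ≤ Q ∧ (∀ t, Q (-t) = Q t) ∧
      eLpNorm (fun t => Q t - (h t : ℂ)) p ν ≤ ε := by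
  obtain ⟨P, hP, hP_nonneg, hPε⟩ :=
    exists_nonneg_mem_trigPolynomials_eLpNorm_sub_le hp₁ hp hh h_nonneg hε
  obtain ⟨Q, hQ, hQP⟩ := exists_mem_trigPolynomials_real_eq_evenPart_re hP
  have hP_eq (t : UnitAddTorus ι) : ((P t).re : ℂ) = P t :=
    (Complex.eq_re_of_ofReal_le (hP_nonneg t)).symm
  simp only [hP_eq] at hQP
  refine ⟨Q, hQ, ContinuousMap.le_def.2 fun t => ?_, fun t => by rw [hQP, hQP, evenPart_neg], ?_⟩
  · rw [hQP]
    exact smul_nonneg (by norm_num) (add_nonneg (hP_nonneg t) (hP_nonneg (-t)))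
  · have hQ_eq : (fun t => Q t - (h t : ℂ)) =ᵐ[ν] evenPart fun t => P t - (h t : ℂ) := by
      filter_upwards [h_even] with t ht
      rw [hQP]
      simp only [evenPart, ht, Complex.real_smul]
      push_cast
      ring
    have hm : AEStronglyMeasurable (fun t => P t - (h t : ℂ)) ν :=
      P.continuous.aestronglyMeasurable.sub
        (Complex.continuous_ofReal.comp_aestronglyMeasurable hh.aestronglyMeasurable)
    exact (eLpNorm_congr_ae hQ_eq).trans_le ((eLpNorm_evenPart_le hp₁ hm).trans hPε)

end Torus

section Cube

variable {ι : Type*}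

/-- The covering map `ℝ^ι → (ℝ / ℤ)^ι` with period `2π` in each coordinate. -/
noncomputable def torusMk (x : ι → ℝ) : UnitAddTorus ι :=
  fun i => ((x i / (2 * π) : ℝ) : UnitAddCircle)

lemma torusMk_neg (x : ι → ℝ) : torusMk (-x) = -torusMk x := by
  ext i
  simp [torusMk, neg_div]

lemma measurable_torusMk : Measurable (torusMk : (ι → ℝ) → UnitAddTorus ι) :=
  measurable_pi_lambda _ fun i => AddCircle.measurable_mk'.comp (by fun_prop)

/-- The section of `torusMk` with values in the half-open cube `(-π, π]^ι`. -/
noncomputable def torusSection (t : UnitAddTorus ι) : ι → ℝ :=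
  fun i => 2 * π * AddCircle.measurableEquivIoc 1 (-(1 / 2)) (t i)

lemma measurable_torusSection : Measurable (torusSection : UnitAddTorus ι → ι → ℝ) := by
  unfold torusSection
  fun_prop

lemma torusSection_torusMk {x : ι → ℝ} (hx : ∀ i, x i ∈ Set.Ioc (-π) π) :
    torusSection (torusMk x) = x := by
  ext i
  have hxi : x i / (2 * π) ∈ Set.Ioc (-(1 / 2) : ℝ) (-(1 / 2) + 1) := by
    rw [Set.mem_Ioc, lt_div_iff₀ two_pi_pos, div_le_iff₀ two_pi_pos]
    constructor <;> linarith [(hx i).1, (hx i).2]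
  have hcoord : (AddCircle.measurableEquivIoc 1 (-(1 / 2)) (torusMk x i) : ℝ) = x i / (2 * π) :=
    AddCircle.equivIoc_coe_of_mem hxi
  rw [torusSection, hcoord, mul_div_cancel₀ _ two_pi_pos.ne']

variable [Fintype ι]

lemma mFourier_torusMk (k : ι → ℤ) (x : ι → ℝ) :
    mFourier k (torusMk x) = Complex.exp (Complex.I * ∑ i, (k i : ℂ) * (x i : ℂ)) := by
  simp only [mFourier, torusMk, ContinuousMap.coe_mk, fourier_coe_apply, ← Complex.exp_sum,
    Finset.mul_sum]
  congr 1
  refine Finset.sum_congr rfl fun i _ => ?_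
  push_cast
  field_simp

lemma exists_subset_Icc_neg_natCast [DecidableEq ι] (s : Finset (ι → ℤ)) :
    ∃ m : ℕ, s ⊆ Finset.Icc (-(m : ι → ℤ)) m := by
  refine ⟨s.sup fun k => Finset.univ.sup fun i => (k i).natAbs, fun k hk => ?_⟩
  have hle (i : ι) : (k i).natAbs ≤ s.sup fun k => Finset.univ.sup fun i => (k i).natAbs :=
    (Finset.le_sup (f := fun i => (k i).natAbs) (Finset.mem_univ i)).trans
      (Finset.le_sup (f := fun k : ι → ℤ => Finset.univ.sup fun i => (k i).natAbs) hk)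
  simp only [Finset.mem_Icc, Pi.le_def, Pi.neg_apply, Pi.natCast_apply]
  exact ⟨fun i => by have := hle i; omega, fun i => by have := hle i; omega⟩

lemma exists_sum_exp_of_mem_trigPolynomials_real [DecidableEq ι] {Q : C(UnitAddTorus ι, ℂ)}
    (hQ : Q ∈ trigPolynomials ℝ ι) :
    ∃ (m : ℕ) (a : (ι → ℤ) → ℝ), ∀ x : ι → ℝ, Q (torusMk x) =
      ∑ k ∈ Finset.Icc (-(m : ι → ℤ)) m,
        (a k : ℂ) * Complex.exp (Complex.I * ∑ i, (k i : ℂ) * (x i : ℂ)) := by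
  obtain ⟨a, rfl⟩ := Finsupp.mem_span_range_iff_exists_finsupp.1 hQ
  obtain ⟨m, hm⟩ := exists_subset_Icc_neg_natCast a.support
  refine ⟨m, a, fun x => ?_⟩
  rw [Finsupp.sum_of_support_subset a hm _ (by simp), ContinuousMap.sum_apply]
  simp [mFourier_torusMk]

variable (ι) in
/-- Lebesgue measure on `ℝ^ι` restricted to the cube `[-π, π]^ι`. -/
noncomputable def cubeMeasure : Measure (ι → ℝ) :=
  volume.restrict (Set.Icc (fun _ => -π) (fun _ => π))

instance : IsFiniteMeasure (cubeMeasure ι) :=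
  isFiniteMeasure_restrict.2 isCompact_Icc.measure_lt_top.ne

instance : (cubeMeasure ι).IsNegInvariant := by
  refine isNegInvariant_restrict measurableSet_Icc (Set.ext fun x => ?_)
  simp only [Set.mem_preimage, Set.mem_Icc, Pi.le_def, Pi.neg_apply, neg_le_neg_iff, neg_le]
  exact and_comm

instance : ((cubeMeasure ι).map torusMk).IsNegInvariant :=
  isNegInvariant_map measurable_torusMk torusMk_neg

lemma ae_cubeMeasure_mem_Ioc : ∀ᵐ x ∂cubeMeasure ι, ∀ i, x i ∈ Set.Ioc (-π) π := by
  rw [cubeMeasure, volume_pi, ← Measure.restrict_congr_set Measure.univ_pi_Ioc_ae_eq_Icc]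
  filter_upwards [ae_restrict_mem (MeasurableSet.univ_pi fun _ => measurableSet_Ioc)] with x hx
  exact fun i => hx i (Set.mem_univ i)

lemma exists_stronglyMeasurable_comp_torusMk_ae_eq {E : Type*} [TopologicalSpace E]
    {f : (ι → ℝ) → E} (hf : AEStronglyMeasurable f (cubeMeasure ι)) :
    ∃ h : UnitAddTorus ι → E, StronglyMeasurable h ∧ h ∘ torusMk =ᵐ[cubeMeasure ι] f := by
  obtain ⟨g, hg, hfg⟩ := hf
  refine ⟨g ∘ torusSection, hg.comp_measurable measurable_torusSection, ?_⟩
  filter_upwards [ae_cubeMeasure_mem_Ioc, hfg] with x hx hfgx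
  rw [Function.comp_apply, Function.comp_apply, torusSection_torusMk hx, hfgx]

variable {p : ℝ≥0∞} {f : (ι → ℝ) → ℝ}

theorem exists_mem_trigPolynomials_eLpNorm_cubeMeasure_sub_le (hp₁ : 1 ≤ p) (hp : p ≠ ∞)
    (hf_nonneg : 0 ≤ᵐ[cubeMeasure ι] f) (hf_even : ∀ᵐ x ∂cubeMeasure ι, f (-x) = f x)
    (hf : MemLp f p (cubeMeasure ι)) {ε : ℝ≥0∞} (hε : ε ≠ 0) :
    ∃ Q ∈ trigPolynomials ℝ ι, 0 ≤ Q ∧ (∀ t, Q (-t) = Q t) ∧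
      eLpNorm (fun x => Q (torusMk x) - (f x : ℂ)) p (cubeMeasure ι) ≤ ε := by
  obtain ⟨h, hh, hhf⟩ := exists_stronglyMeasurable_comp_torusMk_ae_eq hf.aestronglyMeasurable
  have hmk : AEMeasurable torusMk (cubeMeasure ι) := measurable_torusMk.aemeasurable
  have hh_mem : MemLp h p ((cubeMeasure ι).map torusMk) :=
    (memLp_map_measure_iff hh.aestronglyMeasurable hmk).2 ((memLp_congr_ae hhf).2 hf)
  have hh_nonneg : 0 ≤ᵐ[(cubeMeasure ι).map torusMk] h := by
    refine (ae_map_iff hmk (measurableSet_le measurable_const hh.measurable)).2 ?_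
    filter_upwards [hhf, hf_nonneg] with x hx hfx
    exact hfx.trans_eq hx.symm
  have hh_even : ∀ᵐ t ∂(cubeMeasure ι).map torusMk, h (-t) = h t := by
    refine (ae_map_iff hmk
      (measurableSet_eq_fun (hh.measurable.comp measurable_neg) hh.measurable)).2 ?_
    filter_upwards [hhf, (Measure.measurePreserving_neg _).quasiMeasurePreserving.ae hhf,
      hf_even] with x hx hnegx hfx
    rw [Function.comp_apply, ← torusMk_neg]
    exact hnegx.trans (hfx.trans hx.symm)
  obtain ⟨Q, hQ, hQ_nonneg, hQ_even, hQε⟩ :=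
    exists_even_nonneg_mem_trigPolynomials_eLpNorm_sub_le hp₁ hp hh_mem hh_nonneg hh_even hε
  refine ⟨Q, hQ, hQ_nonneg, hQ_even, hQε.trans' ?_⟩
  have hm : StronglyMeasurable fun t => Q t - (h t : ℂ) :=
    Q.continuous.stronglyMeasurable.sub (Complex.continuous_ofReal.comp_stronglyMeasurable hh)
  rw [eLpNorm_map_measure hm.aestronglyMeasurable hmk]
  refine (eLpNorm_congr_ae ?_).le
  filter_upwards [hhf] with x hx
  rw [← hx]
  rfl

theorem stmt_5_general [DecidableEq ι] (hp₁ : 1 ≤ p) (hp : p ≠ ∞)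
    (hf_nonneg : 0 ≤ᵐ[cubeMeasure ι] f) (hf_even : ∀ᵐ x ∂cubeMeasure ι, f (-x) = f x)
    (hf : MemLp f p (cubeMeasure ι)) :
    ∃ F : ℕ → (ι → ℝ) → ℝ,
      (∀ n, ∃ (m : ℕ) (a : (ι → ℤ) → ℝ), ∀ x, (F n x : ℂ) =
        ∑ k ∈ Finset.Icc (-(m : ι → ℤ)) m,
          (a k : ℂ) * Complex.exp (Complex.I * ∑ i, (k i : ℂ) * (x i : ℂ))) ∧
      (∀ n x, 0 ≤ F n x) ∧ (∀ n x, F n (-x) = F n x) ∧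
      Tendsto (fun n => eLpNorm (F n - f) p (cubeMeasure ι)) atTop (nhds 0) := by
  choose Q hQ hQ_nonneg hQ_even hQε using fun n : ℕ =>
    exists_mem_trigPolynomials_eLpNorm_cubeMeasure_sub_le hp₁ hp hf_nonneg hf_even hf
      (ENNReal.inv_ne_zero.2 (ENNReal.natCast_ne_top n))
  have hQ_re (n : ℕ) (t : UnitAddTorus ι) : ((Q n t).re : ℂ) = Q n t :=
    (Complex.eq_re_of_ofReal_le (hQ_nonneg n t)).symm
  refine ⟨fun n x => (Q n (torusMk x)).re, fun n => ?_, fun n x => ?_, fun n x => ?_, ?_⟩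
  · simpa only [hQ_re] using exists_sum_exp_of_mem_trigPolynomials_real (hQ n)
  · exact (Complex.nonneg_iff.1 (hQ_nonneg n (torusMk x))).1
  · simp only [torusMk_neg, hQ_even]
  · refine tendsto_of_tendsto_of_tendsto_of_le_of_le tendsto_const_nhds
      ENNReal.tendsto_inv_nat_nhds_zero (fun n => zero_le) fun n => (hQε n).trans' ?_
    refine eLpNorm_mono fun x => ?_
    simpa using Complex.abs_re_le_norm (Q n (torusMk x) - f x)

end Cube

section Square

lemma measurePreserving_finTwoArrow_cubeMeasure :
    MeasurePreserving MeasurableEquiv.finTwoArrow (cubeMeasure (Fin 2))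
      (volume.restrict (Set.Icc (-π) π ×ˢ Set.Icc (-π) π)) := by
  have hmp := (volume_preserving_finTwoArrow ℝ).restrict_preimage
    (measurableSet_Icc.prod measurableSet_Icc : MeasurableSet (Set.Icc (-π) π ×ˢ Set.Icc (-π) π))
  have hpre : MeasurableEquiv.finTwoArrow ⁻¹' (Set.Icc (-π) π ×ˢ Set.Icc (-π) π) =
      Set.Icc (fun _ : Fin 2 => -π) (fun _ => π) := by
    ext x
    simp [Pi.le_def, Fin.forall_fin_two, MeasurableEquiv.finTwoArrow]
  rwa [hpre] at hmp

lemma sum_Icc_neg_natCast_fin_two {M : Type*} [AddCommMonoid M] (m : ℕ) (u : (Fin 2 → ℤ) → M) :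
    ∑ k ∈ Finset.Icc (-(m : Fin 2 → ℤ)) m, u k =
      ∑ j ∈ Finset.Icc (-(m : ℤ)) m, ∑ k ∈ Finset.Icc (-(m : ℤ)) m, u ![j, k] := by
  rw [← Finset.sum_product']
  refine Finset.sum_equiv (finTwoArrowEquiv ℤ) (fun k => ?_) fun k _ => ?_
  · simp only [Finset.mem_Icc, Pi.le_def, Pi.neg_apply, Pi.natCast_apply, Fin.forall_fin_two,
      finTwoArrowEquiv_apply, Equiv.toFun_as_coe, piFinTwoEquiv_apply, Finset.mem_product]
    tauto
  · exact congrArg u ((finTwoArrowEquiv ℤ).symm_apply_apply k).symm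

lemma tendsto_integral_norm_of_tendsto_eLpNorm_one {X E α : Type*} [MeasurableSpace X]
    [NormedAddCommGroup E] {μ : Measure X} {u : α → X → E} {l : Filter α}
    (hu : Tendsto (fun n => eLpNorm (u n) 1 μ) l (nhds 0)) :
    Tendsto (fun n => ∫ x, ‖u n x‖ ∂μ) l (nhds 0) := by
  refine tendsto_zero_iff_enorm_tendsto_zero.2 (tendsto_of_tendsto_of_tendsto_of_le_of_le
    tendsto_const_nhds hu (fun n => zero_le) fun n => ?_)
  rw [eLpNorm_one_eq_lintegral_enorm]
  simpa only [enorm_norm] using enorm_integral_le_lintegral_enorm fun x => ‖u n x‖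

/-- Every nonnegative, even, integrable function `f` on `[-π,π]²` is the
`L¹`-limit of a sequence of nonnegative even trigonometric polynomials. -/
theorem stmt_5 (f : ℝ → ℝ → ℝ)
    (hf_nonneg : ∀ x ∈ Set.Icc (-π) π, ∀ y ∈ Set.Icc (-π) π, 0 ≤ f x y)
    (hf_even : ∀ x ∈ Set.Icc (-π) π, ∀ y ∈ Set.Icc (-π) π, f (-x) (-y) = f x y)
    (hf_int : IntegrableOn (fun p : ℝ × ℝ => f p.1 p.2)
      (Set.Icc (-π) π ×ˢ Set.Icc (-π) π)) :
    ∃ F : ℕ → ℝ → ℝ → ℝ,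
      (∀ n : ℕ, ∃ (m : ℕ) (a : ℤ → ℤ → ℝ), ∀ x y : ℝ,
        (F n x y : ℂ) =
          ∑ j ∈ Finset.Icc (-(m : ℤ)) (m : ℤ), ∑ k ∈ Finset.Icc (-(m : ℤ)) (m : ℤ),
            (a j k : ℂ) * Complex.exp (Complex.I * ((j : ℂ) * (x : ℂ) + (k : ℂ) * (y : ℂ)))) ∧
      (∀ n : ℕ, ∀ x ∈ Set.Icc (-π) π, ∀ y ∈ Set.Icc (-π) π, 0 ≤ F n x y) ∧
      (∀ n : ℕ, ∀ x ∈ Set.Icc (-π) π, ∀ y ∈ Set.Icc (-π) π, F n (-x) (-y) = F n x y) ∧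
      Tendsto
        (fun n => ∫ p in Set.Icc (-π) π ×ˢ Set.Icc (-π) π, |F n p.1 p.2 - f p.1 p.2|)
        atTop (nhds 0) := by
  have hmp := measurePreserving_finTwoArrow_cubeMeasure
  have hmem := hmp.quasiMeasurePreserving.ae
    (ae_restrict_mem (measurableSet_Icc.prod measurableSet_Icc))
  obtain ⟨F, hF_sum, hF_nonneg, hF_even, hF_lim⟩ :=
    stmt_5_general (ι := Fin 2) (f := fun v => f (v 0) (v 1)) le_rfl ENNReal.one_ne_top
      (hmem.mono fun v hv => hf_nonneg _ hv.1 _ hv.2) (hmem.mono fun v hv => hf_even _ hv.1 _ hv.2)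
      (memLp_one_iff_integrable.2 (hmp.integrable_comp_of_integrable hf_int))
  refine ⟨fun n x y => F n ![x, y], fun n => ?_, fun n x _ y _ => hF_nonneg n _,
    fun n x _ y _ => by simpa using hF_even n ![x, y], ?_⟩
  · obtain ⟨m, a, hFa⟩ := hF_sum n
    exact ⟨m, fun j k => a ![j, k], fun x y => by
      simp [hFa, sum_Icc_neg_natCast_fin_two, Fin.sum_univ_two]⟩
  · refine (tendsto_integral_norm_of_tendsto_eLpNorm_one hF_lim).congr fun n => ?_
    rw [← hmp.integral_comp']
    exact integral_congr_ae (ae_of_all _ fun v =>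
      congrArg (fun w => |F n w - f (v 0) (v 1)|) ((finTwoArrowEquiv ℝ).symm_apply_apply v).symm)

end Square
end

section
/- Let f : [-π,π]² → [0,∞) be integrable and even (f(-x,-y) = f(x,y)), and define C(u,v) = ∫_{-π}^π ∫_{-π}^π e^{ι(ux+vy)} f(x,y) dx dy for u,v ∈ ℤ. Then there exist a probability space and a family of real random variables (G_{i,j} : i,j ∈ ℤ) on it such that every finite real linear combination of the G_{i,j} is a centered Gaussian random variable, and E[G_{i,j} G_{i+u,j+v}] = C(u,v) for all i,j,u,v ∈ ℤ. -/
open MeasureTheory Real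

/-!
Let `μ` be the measure with density `f` on the square. It is finite and, `f` being even, symmetric,
so the characters `exp (ι (i x + j y))` have real inner products in `L²(μ; ℂ)`; by construction
these are the Fourier coefficients `C`. Every real Hilbert space `H` carries an isonormal Gaussian
process, that is, a linear isometry into some `L²(P)` with centered Gaussian values: send a Hilbert
basis of `H` to independent standard normal variables, and note that the centered Gaussian variables
form a closed subset of `L²(P)`. For `H = L²(μ; ℂ)`, seen as a real Hilbert space, the image of the
characters is the required process.
-/

open ProbabilityTheory Filter ComplexConjugate

universe u

section Isonormal

variable {Ω : Type*} {mΩ : MeasurableSpace Ω} {P : Measure Ω}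

lemma coeFn_sum_smul {ι : Type*} (s : Finset ι) (c : ι → ℝ) (f : ι → Lp ℝ 2 P) :
    ⇑(∑ i ∈ s, c i • f i) =ᵐ[P] fun ω => ∑ i ∈ s, c i * f i ω := by
  have h_smul : ∀ᵐ ω ∂P, ∀ i ∈ s, (c i • f i) ω = c i * f i ω :=
    (ae_ball_iff s.countable_toSet).2 fun i _ => Lp.coeFn_smul (c i) (f i)
  filter_upwards [Lp.coeFn_fun_finsetSum s fun i => c i • f i, h_smul] with ω h_sum h_smul
  rw [h_sum, Finset.sum_congr rfl h_smul]

lemma integral_mul_eq_inner (f g : Lp ℝ 2 P) : ∫ ω, f ω * g ω ∂P = inner ℝ f g := by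
  simp [L2.inner_def, mul_comm]

lemma inner_eq_covariance [IsProbabilityMeasure P] {f : Lp ℝ 2 P} (hf : ∫ ω, f ω ∂P = 0)
    (g : Lp ℝ 2 P) : inner ℝ f g = cov[f, g; P] := by
  simp [covariance_eq_sub (Lp.memLp f) (Lp.memLp g), hf, integral_mul_eq_inner]

lemma hasLaw_gaussianReal_of_hasGaussianLaw {f : Lp ℝ 2 P} (hf : HasGaussianLaw f P)
    (hf_mean : ∫ ω, f ω ∂P = 0) : HasLaw f (gaussianReal 0 (‖f‖₊ ^ 2)) P where
  map_eq := by
    have := hf.isProbabilityMeasure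
    rw [hf.map_eq_gaussianReal, hf_mean, ← covariance_self (by fun_prop),
      ← inner_eq_covariance hf_mean, real_inner_self_eq_norm_sq, toNNReal_pow (norm_nonneg f),
      norm_toNNReal]

lemma isClosed_setOf_hasLaw_gaussianReal [IsProbabilityMeasure P] :
    IsClosed {f : Lp ℝ 2 P | HasLaw f (gaussianReal 0 (‖f‖₊ ^ 2)) P} := by
  refine IsSeqClosed.isClosed fun f g hf hfg => ⟨by fun_prop, Measure.ext_of_charFun ?_⟩
  ext t
  have h_dist : TendstoInDistribution (fun n => ⇑(f n)) atTop g (fun _ => P) P :=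
    (tendstoInMeasure_of_tendsto_Lp hfg).tendstoInDistribution fun n => by fun_prop
  have h_map := ProbabilityMeasure.tendsto_iff_tendsto_charFun.1 h_dist.tendsto t
  have h_cont : Continuous fun h : Lp ℝ 2 P => charFun (gaussianReal 0 (‖h‖₊ ^ 2)) t := by
    simp only [charFun_gaussianReal]
    fun_prop
  exact tendsto_nhds_unique h_map <|
    ((h_cont.tendsto g).comp hfg).congr fun n => congrArg (charFun · t) (hf n).map_eq.symm

lemma hasLaw_gaussianReal_of_hasSum {ι : Type*} {g : ι → Lp ℝ 2 P}
    (hg : IsGaussianProcess (fun i => g i) P) (hg_mean : ∀ i, ∫ ω, g i ω ∂P = 0)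
    {c : ι → ℝ} {f : Lp ℝ 2 P} (hf : HasSum (fun i => c i • g i) f) :
    HasLaw f (gaussianReal 0 (‖f‖₊ ^ 2)) P := by
  have := hg.isProbabilityMeasure
  refine isClosed_setOf_hasLaw_gaussianReal.mem_of_tendsto hf (.of_forall fun s => ?_)
  have h_sum := coeFn_sum_smul s c g
  refine hasLaw_gaussianReal_of_hasGaussianLaw
    ((hg.smul c).hasGaussianLaw_fun_sum.congr h_sum.symm) ?_
  rw [integral_congr_ae h_sum,
    integral_finsetSum _ fun i _ => (hg.hasGaussianLaw_eval i).integrable.const_mul _]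
  simp [integral_const_mul, hg_mean]

lemma exists_orthonormal_isGaussianProcess (ι : Type u) :
    ∃ (Ω : Type u) (_ : MeasurableSpace Ω) (P : Measure Ω) (g : ι → Lp ℝ 2 P),
      Orthonormal ℝ g ∧ IsGaussianProcess (fun i => g i) P ∧ ∀ i, ∫ ω, g i ω ∂P = 0 := by
  obtain ⟨Ω, mΩ, P, ξ, -, ξ_law, ξ_indep, hP⟩ := exists_iid ι (gaussianReal 0 1)
  have ξ_memLp (i) : MemLp (ξ i) 2 P := (ξ_law i).hasGaussianLaw.memLp_two
  let g (i : ι) : Lp ℝ 2 P := (ξ_memLp i).toLp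
  have g_ae (i) : g i =ᵐ[P] ξ i := (ξ_memLp i).coeFn_toLp
  have g_law (i) : HasLaw (g i) (gaussianReal 0 1) P := (ξ_law i).congr (g_ae i)
  have g_indep : iIndepFun (fun i => g i) P := ξ_indep.congr fun i => (g_ae i).symm
  have g_mean (i) : ∫ ω, g i ω ∂P = 0 := by rw [(g_law i).integral_eq, integral_id_gaussianReal]
  refine ⟨Ω, mΩ, P, g, ⟨fun i => ?_, fun i j hij => ?_⟩, ⟨fun I => ?_⟩, g_mean⟩
  · rw [norm_eq_sqrt_real_inner, inner_eq_covariance (g_mean i), covariance_self (by fun_prop),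
      (g_law i).variance_eq, variance_id_gaussianReal, NNReal.coe_one, sqrt_one]
  · exact (inner_eq_covariance (g_mean i) (g j)).trans <|
      (g_indep.indepFun hij).covariance_eq_zero (Lp.memLp _) (Lp.memLp _)
  · exact iIndepFun.hasGaussianLaw (fun i : I => (g_law i).hasGaussianLaw)
      (g_indep.precomp Subtype.val_injective)

variable {H : Type*} [NormedAddCommGroup H] [InnerProductSpace ℝ H]

/-- An isonormal Gaussian process over `H`: a linear isometry into `L²(P)` all of whose values are
centered Gaussian. Linearity makes the family of values jointly Gaussian. -/
def IsIsonormal (W : H →ₗᵢ[ℝ] Lp ℝ 2 P) : Prop :=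
  ∀ h, HasLaw (W h) (gaussianReal 0 (‖h‖₊ ^ 2)) P

theorem exists_isIsonormal (H : Type u) [NormedAddCommGroup H] [InnerProductSpace ℝ H]
    [CompleteSpace H] :
    ∃ (Ω : Type u) (_ : MeasurableSpace Ω) (P : Measure Ω) (W : H →ₗᵢ[ℝ] Lp ℝ 2 P),
      IsProbabilityMeasure P ∧ IsIsonormal W := by
  obtain ⟨w, b, -⟩ := exists_hilbertBasis ℝ H
  obtain ⟨Ω, mΩ, P, g, g_orth, g_gauss, g_mean⟩ := exists_orthonormal_isGaussianProcess w
  let V := g_orth.orthogonalFamily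
  refine ⟨Ω, mΩ, P, V.linearIsometry.comp b.repr.toLinearIsometry,
    g_gauss.isProbabilityMeasure, fun h => ?_⟩
  have h_sum : HasSum (fun i => b.repr h i • g i) (V.linearIsometry (b.repr h)) :=
    V.hasSum_linearIsometry (b.repr h)
  simpa using hasLaw_gaussianReal_of_hasSum g_gauss g_mean h_sum

lemma IsIsonormal.hasLaw_sum {W : H →ₗᵢ[ℝ] Lp ℝ 2 P} (hW : IsIsonormal W) {ι : Type*}
    (s : Finset ι) (c : ι → ℝ) (h : ι → H) :
    HasLaw (fun ω => ∑ i ∈ s, c i * W (h i) ω)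
      (gaussianReal 0 (‖∑ i ∈ s, c i • h i‖₊ ^ 2)) P := by
  refine (hW (∑ i ∈ s, c i • h i)).congr ?_
  simpa using (coeFn_sum_smul s c fun i => W (h i)).symm

end Isonormal

section NegInvariant

variable {V : Type*} [MeasurableSpace V] [InvolutiveNeg V] [MeasurableNeg V]
  {μ : Measure V} [μ.IsNegInvariant]

lemma isNegInvariant_restrict_s7 {s : Set V} (hs : MeasurableSet s) (hs_neg : -s = s) :
    (μ.restrict s).IsNegInvariant where
  neg_eq_self := by
    have h_neg := ((Measure.measurePreserving_neg μ).restrict_preimage hs).map_eq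
    rwa [Set.neg_preimage, hs_neg] at h_neg

lemma isNegInvariant_withDensity {g : V → ENNReal} (hg : (fun x => g (-x)) =ᵐ[μ] g) :
    (μ.withDensity g).IsNegInvariant where
  neg_eq_self := by
    ext s hs
    rw [Measure.neg_apply, withDensity_apply _ hs.neg, withDensity_apply _ hs,
      ← (Measure.measurePreserving_neg μ).setLIntegral_comp_preimage_emb
        (MeasurableEquiv.neg V).measurableEmbedding g s, Set.neg_preimage]
    exact lintegral_congr_ae (ae_restrict_of_ae hg.symm)

end NegInvariant

lemma L2_real_inner_eq_re_inner {α : Type*} [MeasurableSpace α] {μ : Measure α} (f g : Lp ℂ 2 μ) :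
    inner ℝ f g = (inner ℂ f g).re := by
  rw [L2.inner_def, L2.inner_def]
  exact integral_re (L2.integrable_inner f g)

section CharFunDual

variable {V : Type*} [NormedAddCommGroup V] [NormedSpace ℝ V] [MeasurableSpace V]

lemma charFunDual_withDensity_ofReal {μ : Measure V} {f : V → ℝ} (hf : AEMeasurable f μ)
    (hf_nonneg : 0 ≤ᵐ[μ] f) (L : StrongDual ℝ V) :
    charFunDual (μ.withDensity fun x => ENNReal.ofReal (f x)) L =
      ∫ x, Complex.exp (L x * Complex.I) * f x ∂μ := by
  rw [charFunDual_apply, integral_withDensity_eq_integral_toReal_smul₀ hf.ennreal_ofReal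
    (.of_forall fun _ => ENNReal.ofReal_lt_top)]
  refine integral_congr_ae ?_
  filter_upwards [hf_nonneg] with x hx
  simp [ENNReal.toReal_ofReal hx, mul_comm]

variable [BorelSpace V] (μ : Measure V)

lemma conj_charFunDual [μ.IsNegInvariant] (L : StrongDual ℝ V) :
    conj (charFunDual μ L) = charFunDual μ L := by
  rw [charFunDual_apply, ← integral_conj, ← integral_neg_eq_self]
  simp [← Complex.exp_conj]

variable [IsFiniteMeasure μ]

/-- The character `x ↦ exp (i L x)` of `V`, as an element of `L²(μ; ℂ)`. -/
noncomputable def charLp (L : StrongDual ℝ V) : Lp ℂ 2 μ :=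
  BoundedContinuousFunction.toLp 2 μ ℂ (BoundedContinuousFunction.probCharDual L)

lemma complex_inner_charLp (L M : StrongDual ℝ V) :
    inner ℂ (charLp μ L) (charLp μ M) = charFunDual μ (M - L) := by
  rw [charLp, charLp, BoundedContinuousFunction.inner_toLp, charFunDual_apply]
  simp [BoundedContinuousFunction.probCharDual_apply, ← Complex.exp_conj, ← Complex.exp_add,
    sub_eq_add_neg, add_mul]

lemma real_inner_charLp [μ.IsNegInvariant] (L M : StrongDual ℝ V) :
    ((inner ℝ (charLp μ L) (charLp μ M) : ℝ) : ℂ) = charFunDual μ (M - L) := by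
  rw [L2_real_inner_eq_re_inner, complex_inner_charLp,
    Complex.conj_eq_iff_re.1 (conj_charFunDual μ _)]

end CharFunDual

lemma intervalIntegral_intervalIntegral_eq_setIntegral_prod {E : Type*} [NormedAddCommGroup E]
    [NormedSpace ℝ E] {a b c d : ℝ} (hab : a ≤ b) (hcd : c ≤ d) {f : ℝ × ℝ → E}
    (hf : IntegrableOn f (Set.Icc a b ×ˢ Set.Icc c d)) :
    ∫ x in a..b, ∫ y in c..d, f (x, y) = ∫ p in Set.Icc a b ×ˢ Set.Icc c d, f p := by
  rw [Measure.volume_eq_prod, setIntegral_prod _ hf]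
  simp_rw [intervalIntegral.integral_of_le hab, intervalIntegral.integral_of_le hcd,
    integral_Icc_eq_integral_Ioc]

/-- The frequency `(x, y) ↦ i x + j y` on `ℝ²` attached to the lattice point `(i, j)`, encoded as
a continuous linear form so that it can be fed to `charFunDual`. -/
noncomputable def latticeFreq (i j : ℤ) : StrongDual ℝ (ℝ × ℝ) :=
  (i : ℝ) • .fst ℝ ℝ ℝ + (j : ℝ) • .snd ℝ ℝ ℝ

lemma latticeFreq_apply (i j : ℤ) (p : ℝ × ℝ) : latticeFreq i j p = i * p.1 + j * p.2 := by
  simp [latticeFreq]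

lemma latticeFreq_add_sub (i j u v : ℤ) :
    latticeFreq (i + u) (j + v) - latticeFreq i j = latticeFreq u v := by
  ext <;> simp [latticeFreq]

lemma charFunDual_withDensity_latticeFreq {a b c d : ℝ} (hab : a ≤ b) (hcd : c ≤ d)
    {f : ℝ → ℝ → ℝ} (hf_nonneg : ∀ x ∈ Set.Icc a b, ∀ y ∈ Set.Icc c d, 0 ≤ f x y)
    (hf_int : IntegrableOn (fun p : ℝ × ℝ => f p.1 p.2) (Set.Icc a b ×ˢ Set.Icc c d))
    (u v : ℤ) :
    charFunDual ((volume.restrict (Set.Icc a b ×ˢ Set.Icc c d)).withDensity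
        fun p => ENNReal.ofReal (f p.1 p.2)) (latticeFreq u v) =
      ∫ x in a..b, ∫ y in c..d, Complex.exp (Complex.I * (u * x + v * y)) * f x y := by
  have h_nonneg : ∀ᵐ p : ℝ × ℝ ∂volume.restrict (Set.Icc a b ×ˢ Set.Icc c d), 0 ≤ f p.1 p.2 :=
    ae_restrict_of_forall_mem (measurableSet_Icc.prod measurableSet_Icc)
      fun p hp => hf_nonneg p.1 hp.1 p.2 hp.2
  have h_int : IntegrableOn (fun p : ℝ × ℝ =>
      Complex.exp (latticeFreq u v p * Complex.I) * f p.1 p.2) (Set.Icc a b ×ˢ Set.Icc c d) :=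
    hf_int.ofReal.bdd_mul (c := 1) (by fun_prop)
      (.of_forall fun p => (Complex.norm_exp_ofReal_mul_I _).le)
  rw [charFunDual_withDensity_ofReal hf_int.aemeasurable h_nonneg,
    ← intervalIntegral_intervalIntegral_eq_setIntegral_prod hab hcd h_int]
  simp [latticeFreq_apply, mul_comm Complex.I]

lemma isNegInvariant_withDensity_Icc_prod_Icc {a b : ℝ} {f : ℝ → ℝ → ℝ}
    (hf_even : ∀ x ∈ Set.Icc (-a) a, ∀ y ∈ Set.Icc (-b) b, f (-x) (-y) = f x y) :
    ((volume.restrict (Set.Icc (-a) a ×ˢ Set.Icc (-b) b)).withDensity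
        fun p : ℝ × ℝ => ENNReal.ofReal (f p.1 p.2)).IsNegInvariant := by
  have hS : MeasurableSet (Set.Icc (-a) a ×ˢ Set.Icc (-b) b) :=
    measurableSet_Icc.prod measurableSet_Icc
  have : (volume.restrict (Set.Icc (-a) a ×ˢ Set.Icc (-b) b)).IsNegInvariant :=
    isNegInvariant_restrict_s7 hS (by simp)
  refine isNegInvariant_withDensity (ae_restrict_of_forall_mem hS fun p hp => ?_)
  simp [hf_even p.1 hp.1 p.2 hp.2]

/-- For a nonnegative, even, integrable `f` on `[-π,π]²` with Fourier
coefficients `C(u,v) = ∫∫ e^{ι(ux+vy)} f(x,y) dx dy`, there exists a centered stationary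
Gaussian process `(G_{i,j} : i,j ∈ ℤ)` on some probability space with covariance
`E[G_{i,j} G_{i+u,j+v}] = C(u,v)`. -/
theorem stmt_7 (f : ℝ → ℝ → ℝ)
    (hf_nonneg : ∀ x ∈ Set.Icc (-π) π, ∀ y ∈ Set.Icc (-π) π, 0 ≤ f x y)
    (hf_even : ∀ x ∈ Set.Icc (-π) π, ∀ y ∈ Set.Icc (-π) π, f (-x) (-y) = f x y)
    (hf_int : IntegrableOn (fun p : ℝ × ℝ => f p.1 p.2)
      (Set.Icc (-π) π ×ˢ Set.Icc (-π) π)) :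
    ∃ (Ω : Type) (mΩ : MeasurableSpace Ω) (P : Measure Ω),
      IsProbabilityMeasure P ∧
      ∃ G : ℤ → ℤ → Ω → ℝ,
        (∀ i j : ℤ, Measurable (G i j)) ∧
        (∀ (m : ℕ) (c : Fin m → ℝ) (idx : Fin m → ℤ × ℤ), ∃ v : NNReal,
          Measure.map (fun ω => ∑ p, c p * G (idx p).1 (idx p).2 ω) P =
            ProbabilityTheory.gaussianReal 0 v) ∧
        (∀ i j u v : ℤ,
          ((∫ ω, G i j ω * G (i + u) (j + v) ω ∂P : ℝ) : ℂ) =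
            ∫ x in (-π)..π, ∫ y in (-π)..π,
              Complex.exp (Complex.I * ((u : ℂ) * (x : ℂ) + (v : ℂ) * (y : ℂ)))
                * (f x y : ℂ)) := by
  set μ := (volume.restrict (Set.Icc (-π) π ×ˢ Set.Icc (-π) π)).withDensity
    fun p : ℝ × ℝ => ENNReal.ofReal (f p.1 p.2)
  have : IsFiniteMeasure μ := isFiniteMeasure_withDensity_ofReal hf_int.2
  have : μ.IsNegInvariant := isNegInvariant_withDensity_Icc_prod_Icc hf_even
  obtain ⟨Ω, mΩ, P, W, hP, hW⟩ := exists_isIsonormal (Lp ℂ 2 μ)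
  let φ (s : ℤ × ℤ) : Lp ℂ 2 μ := charLp μ (latticeFreq s.1 s.2)
  refine ⟨Ω, mΩ, P, hP, fun i j => W (φ (i, j)), fun i j => (Lp.stronglyMeasurable _).measurable,
    fun m c idx => ⟨_, (hW.hasLaw_sum Finset.univ c fun p => φ (idx p)).map_eq⟩,
    fun i j u v => ?_⟩
  have hπ : -π ≤ π := by linarith [pi_pos]
  rw [integral_mul_eq_inner, W.inner_map_map, real_inner_charLp, latticeFreq_add_sub,
    charFunDual_withDensity_latticeFreq hπ hπ hf_nonneg hf_int]
end
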